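/- arXiv:1704.03596 — 2 statements merged into one kernel-verified Lean document; each statement's English description precedes it below -/
import Mathlib

section
/- For every angle α with 0 < α ≤ π/3, the quantity cos α + 5·sin α/√3 is at most 3, with equality when α = π/3. -/
/-!
With `c = cos α ≥ 1/2` and `t = sin α / √3`, one has `c² + 3 t² = 1`. If `5 t > 3 - c ≥ 0`, squaring
gives `25 (1 - c²) > 3 (3 - c)²`, that is `(2 c - 1) (7 c - 1) < 0`, impossible for `c ≥ 1/2`.
-/

open Real

/-- For every `α` with `0 < α ≤ π/3`, `cos α + 5·sin α/√3 ≤ 3`, with equality at `α = π/3`. -/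
theorem stmt_4 :
    (∀ α : ℝ, 0 < α → α ≤ Real.pi / 3 →
      Real.cos α + 5 * Real.sin α / Real.sqrt 3 ≤ 3) ∧
    Real.cos (Real.pi / 3) + 5 * Real.sin (Real.pi / 3) / Real.sqrt 3 = 3 := by
  have h3 : Real.sqrt 3 ≠ 0 := by positivity
  constructor
  · intro α h0 h1
    have hc : 1 / 2 ≤ Real.cos α := by
      rw [← Real.cos_pi_div_three]
      exact Real.cos_le_cos_of_nonneg_of_le_pi h0.le (by linarith [Real.pi_pos]) h1
    have hc1 := Real.cos_le_one α
    have ht : Real.cos α ^ 2 + 3 * (Real.sin α / Real.sqrt 3) ^ 2 = 1 := by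
      rw [div_pow, Real.sq_sqrt (by norm_num)]
      linarith [Real.sin_sq_add_cos_sq α]
    rw [mul_div_assoc]
    generalize Real.sin α / Real.sqrt 3 = t at *
    generalize Real.cos α = c at *
    by_contra! h
    have hsq : (3 - c) ^ 2 < (5 * t) ^ 2 := pow_lt_pow_left₀ (by linarith) (by linarith) (by norm_num)
    have hq : 0 ≤ (2 * c - 1) * (7 * c - 1) := mul_nonneg (by linarith) (by linarith)
    nlinarith
  · rw [Real.cos_pi_div_three, Real.sin_pi_div_three]
    field_simp
    norm_num
end

section
/- The constrained half-θ₆-graph is plane: no two of its edges properly cross. -/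
/-!
The proof compares the graph with a Delaunay triangulation for a triangular distance. Let `fn k`
(`k : Fin 3`) be the three linear forms measuring the component along the bisectors of the positive
cones; they sum to zero, and `v` lies in the positive cone `Cᵢ` of `u` iff `fn j v < fn j u` for
both `j ≠ i` (`inPos_iff`). The canonical triangle of an edge `uv` is therefore
`{q | ∀ k, fn k q ≤ max (fn k u) (fn k v)}`, which is symmetric in `u` and `v`.

If two segments cross, one of them has an endpoint in the canonical triangle of the other
(`endpoint_in_triangle`): otherwise each triangle would extend strictly beyond the other across at
least two of the three sides, and three sides are too few for that.

It remains to exclude an endpoint `x` of `xy` in the canonical triangle of an edge `uv` with apex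
`u` (`no_endpoint_in_triangle`). Let `p` be the crossing point. Among the vertices of the triangle
`upx` other than `u`, the vertex `w` closest in angle to `uv` is visible from `u` and is not
separated from `v` by a constraint at `u`, since a violating constraint would have to cross `uv` or
`xy` (`exists_visible`). But `w` lies in the same cone of `u` as `v` and is strictly nearer to `u`,
contradicting the choice of `v`.
-/

open Real Set

noncomputable section

namespace CHT6

/-- Points in the plane. -/
abbrev Pt := ℝ × ℝ

/-- Euclidean distance. -/
def dst (p q : Pt) : ℝ := Real.sqrt ((p.1 - q.1) ^ 2 + (p.2 - q.2) ^ 2)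

/-- Unsigned angle at `q` between segments `qp` and `qr`. -/
def ang (p q r : Pt) : ℝ :=
  Real.arccos (((p.1 - q.1) * (r.1 - q.1) + (p.2 - q.2) * (r.2 - q.2)) / (dst p q * dst r q))

/-- 2D cross product. -/
def crossP (a b : Pt) : ℝ := a.1 * b.2 - a.2 * b.1

/-- The segments `ab` and `cd` properly cross: their relative interiors meet. -/
def PCross (a b c d : Pt) : Prop := (openSegment ℝ a b ∩ openSegment ℝ c d).Nonempty

/-- `uz` is a constraint of `S`. -/
def Constr (S : Set (Pt × Pt)) (u z : Pt) : Prop := (u, z) ∈ S ∨ (z, u) ∈ S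

/-- `u` and `v` see each other: `uv` is a constraint or no constraint properly crosses it. -/
def CanSee (S : Set (Pt × Pt)) (u v : Pt) : Prop :=
  Constr S u v ∨ ∀ c ∈ S, ¬ PCross c.1 c.2 u v

/-- Rotation of the plane by angle `θ` about the origin. -/
def rot (θ : ℝ) (p : Pt) : Pt :=
  (Real.cos θ * p.1 - Real.sin θ * p.2, Real.sin θ * p.1 + Real.cos θ * p.2)

/-- `p` relative to `u`, rotated so that the positive cone `Cᵢ` becomes the upward cone. -/
def rel (i : ℕ) (u p : Pt) : Pt := rot (-(2 * Real.pi * i / 3)) (p - u)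

/-- `p` lies in the (open) positive cone `Cᵢ` of `u` (width π/3; `C₀` is upward vertical). -/
def inPos (i : ℕ) (u p : Pt) : Prop := Real.sqrt 3 * |(rel i u p).1| < (rel i u p).2

/-- `p` lies in the negative cone `C̄ᵢ` of `u`. -/
def inNeg (i : ℕ) (u p : Pt) : Prop := inPos i p u

/-- Length of the projection of `p` onto the bisector of the positive cone `Cᵢ` of `u`. -/
def projLen (i : ℕ) (u p : Pt) : ℝ := (rel i u p).2

/-- Projected distance of `p` from `u` for the negative cone `C̄ᵢ` of `u`. -/
def negProj (i : ℕ) (u p : Pt) : ℝ := projLen i p u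

/-- `p` and `q` are not strictly separated, within the cone `cone` at `u`, by a constraint
incident to `u`: they lie in a common (closed) subcone. -/
def SameSubIn (cone : Pt → Pt → Prop) (S : Set (Pt × Pt)) (u p q : Pt) : Prop :=
  ∀ z, Constr S u z → cone u z →
    ¬ (crossP (z - u) (p - u) * crossP (z - u) (q - u) < 0)

def SameSubPos (S : Set (Pt × Pt)) (i : ℕ) (u p q : Pt) : Prop := SameSubIn (inPos i) S u p q

def SameSubNeg (S : Set (Pt × Pt)) (i : ℕ) (u p q : Pt) : Prop := SameSubIn (inNeg i) S u p q

/-- General position: no two points of `P` define a line parallel to one of the six cone rays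
(slopes `0`, `√3`, `-√3`), and no three points of `P` are collinear. -/
def GenPos (P : Set Pt) : Prop :=
  (∀ p ∈ P, ∀ q ∈ P, p ≠ q →
    p.2 ≠ q.2 ∧ q.2 - p.2 ≠ Real.sqrt 3 * (q.1 - p.1) ∧
      q.2 - p.2 ≠ -(Real.sqrt 3 * (q.1 - p.1))) ∧
  (∀ p ∈ P, ∀ q ∈ P, ∀ r ∈ P, p ≠ q → q ≠ r → p ≠ r → ¬ Collinear ℝ ({p, q, r} : Set Pt))

/-- `v` is, among the vertices visible from `u` in the positive subcone of `u` containing `v`,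
the one minimizing the projection onto the cone bisector: `u` adds the edge `uv`. -/
def EdgeDir (P : Set Pt) (S : Set (Pt × Pt)) (u v : Pt) : Prop :=
  u ∈ P ∧ v ∈ P ∧ ∃ i < 3, inPos i u v ∧ CanSee S u v ∧
    ∀ w ∈ P, w ≠ u → inPos i u w → CanSee S u w → SameSubPos S i u v w →
      projLen i u v ≤ projLen i u w

/-- Edges of the constrained half-θ₆-graph. -/
def HEdge (P : Set Pt) (S : Set (Pt × Pt)) (u v : Pt) : Prop :=
  EdgeDir P S u v ∨ EdgeDir P S v u

/-- `f` is a path in the graph with edge relation `E`. -/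
def IsPath (E : Pt → Pt → Prop) {n : ℕ} (f : Fin (n + 1) → Pt) : Prop :=
  ∀ j : Fin n, E (f j.castSucc) (f j.succ)

/-- Euclidean length of a polygonal path. -/
def pathLen {n : ℕ} (f : Fin (n + 1) → Pt) : ℝ :=
  ∑ j : Fin n, dst (f j.castSucc) (f j.succ)

/-- `x` is a vertex of the canonical sequence of `u` in the negative cone `C̄ᵘᵢ`. -/
def CanonVert (P : Set Pt) (S : Set (Pt × Pt)) (i : ℕ) (u x : Pt) : Prop :=
  x ∈ P ∧ HEdge P S u x ∧ inNeg i u x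

/-- `v` and `w` are consecutive (in counterclockwise order) vertices of the canonical path of
`u` in a subcone of the negative cone `C̄ᵘᵢ`. -/
def ConsecCanon (P : Set Pt) (S : Set (Pt × Pt)) (i : ℕ) (u v w : Pt) : Prop :=
  CanonVert P S i u v ∧ CanonVert P S i u w ∧ SameSubNeg S i u v w ∧
  crossP (v - u) (w - u) > 0 ∧
  ∀ x ∈ P, CanonVert P S i u x → SameSubNeg S i u v x →
    ¬ (crossP (v - u) (x - u) > 0 ∧ crossP (x - u) (w - u) > 0)

/-- `x` is a closest canonical vertex of `u` in (a subcone of) the negative cone `C̄ᵘᵢ`,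
distances being measured by projection onto the cone bisector. -/
def ClosestCanon (P : Set Pt) (S : Set (Pt × Pt)) (i : ℕ) (u x : Pt) : Prop :=
  CanonVert P S i u x ∧
  ∀ y ∈ P, CanonVert P S i u y → SameSubNeg S i u x y → negProj i u x ≤ negProj i u y

/-- Edges of the bounded-degree graph `G₉`: canonical-path edges together with, for each
negative subcone, the edge to the closest canonical vertex. -/
def G9Edge (P : Set Pt) (S : Set (Pt × Pt)) (a b : Pt) : Prop :=
  (∃ u ∈ P, ∃ i < 3, ConsecCanon P S i u a b ∨ ConsecCanon P S i u b a) ∨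
  (∃ i < 3, ClosestCanon P S i a b ∨ ClosestCanon P S i b a)

/-- Coordinate of `p` along the right boundary direction `(1/2, √3/2)` of the upward cone. -/
def coordA (p : Pt) : ℝ := p.1 + p.2 / Real.sqrt 3

/-- Coordinate of `p` along the left boundary direction `(-1/2, √3/2)` of the upward cone. -/
def coordB (p : Pt) : ℝ := -p.1 + p.2 / Real.sqrt 3

end CHT6

namespace CHT6

/-! ### The three linear forms of the cones -/

/-- The component of `q` along the bisector of the positive cone `Cₖ`. -/
def fn (k : Fin 3) (q : Pt) : ℝ :=
  (![0, -(√3 / 2), √3 / 2] : Fin 3 → ℝ) k * q.1 + (![1, -(1 / 2), -(1 / 2)] : Fin 3 → ℝ) k * q.2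

lemma trig1 : Real.cos (-(2 * Real.pi * (1 : ℕ) / 3)) = -(1 / 2) ∧
    Real.sin (-(2 * Real.pi * (1 : ℕ) / 3)) = -(√3 / 2) := by
  have h : -(2 * Real.pi * (1 : ℕ) / 3) = Real.pi / 3 - Real.pi := by push_cast; ring
  rw [h, Real.cos_sub_pi, Real.sin_sub_pi, Real.cos_pi_div_three, Real.sin_pi_div_three]
  simp

lemma trig2 : Real.cos (-(2 * Real.pi * (2 : ℕ) / 3)) = -(1 / 2) ∧
    Real.sin (-(2 * Real.pi * (2 : ℕ) / 3)) = √3 / 2 := by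
  have h : -(2 * Real.pi * (2 : ℕ) / 3) = -(Real.pi / 3 + Real.pi) := by push_cast; ring
  rw [h, Real.cos_neg, Real.sin_neg, Real.cos_add_pi, Real.sin_add_pi, Real.cos_pi_div_three,
    Real.sin_pi_div_three]
  simp

lemma projLen_eq (i : Fin 3) (u p : Pt) : projLen i u p = fn i p - fn i u := by
  fin_cases i
  · simp [projLen, rel, rot, fn]
  · have := trig1
    simp only [projLen, rel, rot, fn, this.1, this.2]
    simp
    ring
  · have := trig2
    simp only [projLen, rel, rot, fn, this.1, this.2]
    simp
    ring

lemma sqrt3_abs_lt {a b : ℝ} : √3 * |a| < b ↔ √3 * a < b ∧ -(√3 * a) < b := by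
  have h : √3 * |a| = |√3 * a| := by
    rw [abs_mul, abs_of_nonneg (Real.sqrt_nonneg 3)]
  rw [h, abs_lt]
  constructor <;> rintro ⟨h1, h2⟩ <;> constructor <;> linarith

lemma inPos_iff (i : Fin 3) (u p : Pt) : inPos i u p ↔ ∀ j, j ≠ i → fn j p < fn j u := by
  have h3 : √3 * √3 = 3 := Real.mul_self_sqrt (by norm_num)
  unfold inPos
  rw [sqrt3_abs_lt]
  fin_cases i
  · simp [Fin.forall_fin_succ, rel, rot, fn]
    constructor <;> rintro ⟨h1, h2⟩ <;> constructor <;> linarith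
  · have := trig1
    simp only [rel, rot, this.1, this.2]
    simp [Fin.forall_fin_succ, fn]
    constructor <;> rintro ⟨h1, h2⟩ <;> constructor <;> nlinarith
  · have := trig2
    simp only [rel, rot, this.1, this.2]
    simp [Fin.forall_fin_succ, fn]
    constructor <;> rintro ⟨h1, h2⟩ <;> constructor <;> nlinarith

lemma fn_sum (q : Pt) : fn 0 q + fn 1 q + fn 2 q = 0 := by
  simp [fn]; ring

lemma fn_ne {P : Set Pt} (hGP : GenPos P) {p q : Pt} (hp : p ∈ P) (hq : q ∈ P) (hpq : p ≠ q)
    (k : Fin 3) : fn k p ≠ fn k q := by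
  obtain ⟨h0, h1, h2⟩ := hGP.1 p hp q hq hpq
  intro h
  fin_cases k
  · apply h0; simpa [fn] using h
  · apply h2; simp [fn] at h; linarith
  · apply h1; simp [fn] at h; linarith

/-! ### Segments and general position -/

lemma mem_os {a b q : Pt} : q ∈ openSegment ℝ a b ↔
    ∃ τ : ℝ, 0 < τ ∧ τ < 1 ∧ q.1 = a.1 + τ * (b.1 - a.1) ∧ q.2 = a.2 + τ * (b.2 - a.2) := by
  rw [openSegment_eq_image]
  constructor
  · rintro ⟨τ, ⟨h0, h1⟩, rfl⟩
    refine ⟨τ, h0, h1, ?_, ?_⟩ <;> simp <;> ring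
  · rintro ⟨τ, h0, h1, h2, h3⟩
    refine ⟨τ, ⟨h0, h1⟩, ?_⟩
    ext
    · simp [h2]; ring
    · simp [h3]; ring

lemma cross_ne {P : Set Pt} (hGP : GenPos P) {p q r : Pt} (hp : p ∈ P) (hq : q ∈ P) (hr : r ∈ P)
    (h1 : p ≠ q) (h2 : q ≠ r) (h3 : p ≠ r) : crossP (q - p) (r - p) ≠ 0 := by
  intro h
  refine hGP.2 p hp q hq r hr h1 h2 h3 ?_
  rw [collinear_iff_of_mem (p₀ := p) (by simp)]
  simp only [crossP, Prod.fst_sub, Prod.snd_sub] at h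
  -- General position makes the second coordinates of `p` and `q` differ.
  have hd : q.2 - p.2 ≠ 0 := by
    have := (hGP.1 p hp q hq h1).1
    intro h'; apply this; linarith
  refine ⟨q - p, ?_⟩
  intro z hz
  simp only [mem_insert_iff, mem_singleton_iff] at hz
  rcases hz with rfl | rfl | rfl
  · exact ⟨0, by simp⟩
  · exact ⟨1, by simp⟩
  · refine ⟨(z.2 - p.2) / (q.2 - p.2), ?_⟩
    ext
    · simp; field_simp; linarith
    · simp; field_simp; ring

lemma canSee_symm {S : Set (Pt × Pt)} {u v : Pt} (h : CanSee S u v) : CanSee S v u := by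
  rcases h with h | h
  · exact Or.inl h.symm
  · right; intro c hc; unfold PCross; rw [openSegment_symm ℝ v u]; exact h c hc

/-- The only constraint that can meet the interior of a segment between mutually visible points
is that segment itself. -/
lemma eq_of_cross {S : Set (Pt × Pt)}
    (hSnc : ∀ c ∈ S, ∀ d ∈ S, c ≠ d → ¬ PCross c.1 c.2 d.1 d.2)
    {u v a b q : Pt} (h : CanSee S u v) (hab : Constr S a b)
    (hq : q ∈ openSegment ℝ a b) (hq' : q ∈ openSegment ℝ u v) :
    (a = u ∧ b = v) ∨ (a = v ∧ b = u) := by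
  have key : ∀ a b : Pt, (a, b) ∈ S → q ∈ openSegment ℝ a b →
      (a = u ∧ b = v) ∨ (a = v ∧ b = u) := by
    intro a b hab hq
    rcases h with (h | h) | h
    · by_cases he : (a, b) = (u, v)
      · left; simpa using he
      · exact absurd ⟨q, hq, hq'⟩ (hSnc _ hab _ h he)
    · by_cases he : (a, b) = (v, u)
      · right; simpa using he
      · rw [openSegment_symm ℝ] at hq'
        exact absurd ⟨q, hq, hq'⟩ (hSnc _ hab _ h he)
    · exact absurd ⟨q, hq, hq'⟩ (h _ hab)
  rcases hab with hab | hab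
  · exact key a b hab hq
  · rw [openSegment_symm ℝ] at hq
    rcases key b a hab hq with h | h
    · exact Or.inr ⟨h.2, h.1⟩
    · exact Or.inl ⟨h.2, h.1⟩

lemma no_shared {P : Set Pt} (hGP : GenPos P) {u v y p : Pt} (hu : u ∈ P) (hv : v ∈ P)
    (hy : y ∈ P) (h1 : u ≠ v) (h2 : v ≠ y) (h3 : u ≠ y) (hp : p ∈ openSegment ℝ u v)
    (hp' : p ∈ openSegment ℝ u y) : False := by
  obtain ⟨τ, h0, -, ha, hb⟩ := mem_os.1 hp
  obtain ⟨σ, k0, -, ka, kb⟩ := mem_os.1 hp'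
  apply cross_ne hGP hu hv hy h1 h2 h3
  have e1 : τ * (v.1 - u.1) = σ * (y.1 - u.1) := by linarith
  have e2 : τ * (v.2 - u.2) = σ * (y.2 - u.2) := by linarith
  have : τ * σ * crossP (v - u) (y - u) = 0 := by
    simp only [crossP, Prod.fst_sub, Prod.snd_sub]
    linear_combination σ * (y.2 - u.2) * e1 - σ * (y.1 - u.1) * e2
  rcases mul_eq_zero.1 this with h | h
  · exact absurd h (by positivity)
  · exact h

/-! ### A visible vertex in the triangle spanned by a crossing -/

/-- A segment from a point `(m₁, m₂)` of the ray through `(s₀, t₀)`, inside the standard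
triangle, to a point `(a₁, a₂)` on the positive-`s` side of that ray and outside the triangle, leaves
the triangle through the side `t = 0` or the side `s + t = 1`, away from the vertices `(0, 0)`
and `(0, 1)`. -/
lemma exit_triangle {m₁ m₂ a₁ a₂ s₀ t₀ : ℝ} (hm : 0 < m₂) (hm' : m₁ + m₂ < 1)
    (hr : m₁ * t₀ = s₀ * m₂) (hs : 0 ≤ s₀) (ht : 0 < t₀) (hg : s₀ * a₂ < a₁ * t₀)
    (ho : a₂ < 0 ∨ 1 < a₁ + a₂) :
    ∃ τ : ℝ, 0 < τ ∧ τ < 1 ∧ 0 < m₁ + τ * (a₁ - m₁) ∧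
      ((m₂ + τ * (a₂ - m₂) = 0 ∧ m₁ + τ * (a₁ - m₁) ≤ 1) ∨
       (m₁ + τ * (a₁ - m₁) + (m₂ + τ * (a₂ - m₂)) = 1 ∧ 0 ≤ m₂ + τ * (a₂ - m₂))) := by
  let h : ℝ → ℝ := fun τ =>
    min (m₂ + τ * (a₂ - m₂)) (1 - (m₁ + τ * (a₁ - m₁)) - (m₂ + τ * (a₂ - m₂)))
  have hc : ContinuousOn h (Icc 0 1) := by
    apply Continuous.continuousOn; fun_prop
  have h0 : 0 < h 0 := by simp only [h, lt_min_iff]; constructor <;> linarith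
  have h1 : h 1 < 0 := by
    simp only [h, min_lt_iff]
    rcases ho with ho | ho
    · left; linarith
    · right; linarith
  obtain ⟨τ, ⟨hτ0, hτ1⟩, hτ⟩ := intermediate_value_Ioo' zero_le_one hc ⟨h1, h0⟩
  have hpos : 0 ≤ m₂ + τ * (a₂ - m₂) := by rw [← hτ]; exact min_le_left _ _
  have hle : 0 ≤ 1 - (m₁ + τ * (a₁ - m₁)) - (m₂ + τ * (a₂ - m₂)) := by
    rw [← hτ]; exact min_le_right _ _
  refine ⟨τ, hτ0, hτ1, ?_, ?_⟩
  · have e : (m₁ + τ * (a₁ - m₁)) * t₀ =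
        s₀ * (m₂ + τ * (a₂ - m₂)) + τ * (a₁ * t₀ - s₀ * a₂) := by
      linear_combination (1 - τ) * hr
    have e' : 0 < (m₁ + τ * (a₁ - m₁)) * t₀ := by
      rw [e]
      have := mul_pos hτ0 (sub_pos.2 hg)
      have := mul_nonneg hs hpos
      linarith
    exact pos_of_mul_pos_left e' ht.le
  · rcases min_choice (m₂ + τ * (a₂ - m₂))
      (1 - (m₁ + τ * (a₁ - m₁)) - (m₂ + τ * (a₂ - m₂))) with hh | hh
    · left
      have : m₂ + τ * (a₂ - m₂) = 0 := hh.symm.trans hτ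
      exact ⟨this, by linarith⟩
    · right
      have : 1 - (m₁ + τ * (a₁ - m₁)) - (m₂ + τ * (a₂ - m₂)) = 0 := hh.symm.trans hτ
      exact ⟨by linarith, hpos⟩

/-- Affine coordinates `(s, t)` of the plane with origin `u` and unit points `p` and `x`. -/
lemma exists_frame {u p x : Pt} (hc : crossP (p - u) (x - u) ≠ 0) : ∃ s t : Pt → ℝ,
    (∀ q, q = u + s q • (p - u) + t q • (x - u)) ∧
    (∀ a b, s (u + a • (p - u) + b • (x - u)) = a ∧ t (u + a • (p - u) + b • (x - u)) = b) ∧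
    (∀ a b q : Pt, ∀ τ : ℝ, q.1 = a.1 + τ * (b.1 - a.1) → q.2 = a.2 + τ * (b.2 - a.2) →
      s q = s a + τ * (s b - s a)) ∧
    (∀ a b q : Pt, ∀ τ : ℝ, q.1 = a.1 + τ * (b.1 - a.1) → q.2 = a.2 + τ * (b.2 - a.2) →
      t q = t a + τ * (t b - t a)) := by
  obtain ⟨D, hD⟩ : ∃ D, D = crossP (p - u) (x - u) := ⟨_, rfl⟩
  rw [← hD] at hc
  simp only [crossP, Prod.fst_sub, Prod.snd_sub] at hD
  refine ⟨fun q => crossP (q - u) (x - u) / D, fun q => crossP (p - u) (q - u) / D,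
    ?_, ?_, ?_, ?_⟩
  · intro q
    ext
    · simp [crossP]; field_simp; rw [hD]; ring
    · simp [crossP]; field_simp; rw [hD]; ring
  · intro a b
    constructor
    · simp [crossP]; field_simp; rw [hD]; ring
    · simp [crossP]; field_simp; rw [hD]; ring
  · intro a b q τ h1 h2
    simp [crossP, h1, h2]; field_simp; ring
  · intro a b q τ h1 h2
    simp [crossP, h1, h2]; field_simp; ring

set_option maxHeartbeats 2000000 in
/-- If the segments `uv` and `xy` between mutually visible vertices cross at `p`, the triangle
`upx` contains a vertex `w` off the line `uv` that is visible from `u` and that no constraint at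
`u` separates from `v`, except possibly one leaving `u` into the cone opposite to `upx`. -/
lemma exists_visible {P : Set Pt} {S : Set (Pt × Pt)} (hPfin : P.Finite)
    (hSP : ∀ c ∈ S, c.1 ∈ P ∧ c.2 ∈ P)
    (hSnc : ∀ c ∈ S, ∀ d ∈ S, c ≠ d → ¬ PCross c.1 c.2 d.1 d.2)
    (hGP : GenPos P) {u v x y p : Pt} (hu : u ∈ P) (hv : v ∈ P) (hx : x ∈ P)
    (huv : CanSee S u v) (hxy : CanSee S x y)
    (hp : p ∈ openSegment ℝ u v) (hp' : p ∈ openSegment ℝ x y)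
    (huv' : u ≠ v) (hux : x ≠ u) (hvx : x ≠ v) (huy : y ≠ u) :
    ∃ w ∈ P, ∃ s₀ t₀ : ℝ, 0 ≤ s₀ ∧ 0 < t₀ ∧ s₀ + t₀ ≤ 1 ∧
      w = u + s₀ • (p - u) + t₀ • (x - u) ∧ CanSee S u w ∧
      ∀ z, Constr S u z → crossP (z - u) (v - u) * crossP (z - u) (w - u) < 0 →
        ∃ a b : ℝ, a < 0 ∧ b < 0 ∧ z = u + a • (p - u) + b • (x - u) := by
  obtain ⟨ρ, hρ0, hρ1, hp1, hp2⟩ := mem_os.1 hp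
  obtain ⟨σ, hσ0, hσ1, hq1, hq2⟩ := mem_os.1 hp'
  have hc : crossP (p - u) (x - u) ≠ 0 := by
    have h := cross_ne hGP hu hv hx huv' hvx.symm hux.symm
    have e : crossP (p - u) (x - u) = ρ * crossP (v - u) (x - u) := by
      simp only [crossP, Prod.fst_sub, Prod.snd_sub, hp1, hp2]; ring
    rw [e]; exact mul_ne_zero hρ0.ne' h
  -- Affine coordinates in which `u`, `p`, `x` become `(0, 0)`, `(1, 0)`, `(0, 1)`.
  obtain ⟨s, t, hst, hst', hs_aff, ht_aff⟩ := exists_frame hc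
  have su : s u = 0 ∧ t u = 0 := by simpa using hst' 0 0
  have sp : s p = 1 ∧ t p = 0 := by simpa using hst' 1 0
  have sx : s x = 0 ∧ t x = 1 := by simpa using hst' 0 1
  have sv : ρ * s v = 1 ∧ t v = 0 := by
    have h1 := hs_aff u v p ρ hp1 hp2
    have h2 := ht_aff u v p ρ hp1 hp2
    rw [su.1, sp.1] at h1
    rw [su.2, sp.2] at h2
    refine ⟨by linarith, ?_⟩
    have : ρ * t v = 0 := by linarith
    exact (mul_eq_zero.1 this).resolve_left hρ0.ne'
  have sv1 : 1 < s v := by nlinarith [sv.1]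
  have sy : s y + t y = 1 := by
    have h1 := hs_aff x y p σ hq1 hq2
    have h2 := ht_aff x y p σ hq1 hq2
    rw [sx.1, sp.1] at h1
    rw [sx.2, sp.2] at h2
    have : σ * (s y + t y - 1) = 0 := by linarith
    have := (mul_eq_zero.1 this).resolve_left hσ0.ne'
    linarith
  have ext_st : ∀ {q r : Pt}, s q = s r → t q = t r → q = r := by
    intro q r h1 h2
    rw [hst q, hst r, h1, h2]
  -- The two sides of the triangle through which a constraint cannot leave.
  have side1 : ∀ q : Pt, t q = 0 → 0 < s q → s q ≤ 1 → q ∈ openSegment ℝ u v := by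
    intro q h1 h2 h3
    refine mem_os.2 ⟨s q * ρ, by positivity, by nlinarith, ?_, ?_⟩
    · have := congrArg Prod.fst (hst q)
      simp [h1, hp1] at this; linarith
    · have := congrArg Prod.snd (hst q)
      simp [h1, hp2] at this; linarith
  have side2 : ∀ q : Pt, s q + t q = 1 → 0 < s q → 0 ≤ t q → q ∈ openSegment ℝ x y := by
    intro q h1 h2 h3
    have h4 : t q = 1 - s q := by linarith
    refine mem_os.2 ⟨s q * σ, by positivity, by nlinarith, ?_, ?_⟩
    · have := congrArg Prod.fst (hst q)
      simp [h4] at this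
      rw [this]; linear_combination s q * hq1
    · have := congrArg Prod.snd (hst q)
      simp [h4] at this
      rw [this]; linear_combination s q * hq2
  let Tri : Set Pt := {q | q ∈ P ∧ q ≠ u ∧ 0 ≤ s q ∧ 0 ≤ t q ∧ s q + t q ≤ 1}
  have t_pos : ∀ q ∈ Tri, 0 < t q := by
    rintro q ⟨hqP, hqu, h1, h2, h3⟩
    rcases h2.lt_or_eq with h | h
    · exact h
    exfalso
    have hqv : q ≠ v := by rintro rfl; linarith
    refine cross_ne hGP hu hv hqP huv' hqv.symm hqu.symm ?_
    have a1 := congrArg Prod.fst (hst q)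
    have a2 := congrArg Prod.snd (hst q)
    simp [← h, hp1] at a1
    simp [← h, hp2] at a2
    simp only [crossP, Prod.fst_sub, Prod.snd_sub, a1, a2]; ring
  have hfin : Tri.Finite := hPfin.subset (fun q hq => hq.1)
  have hxT : x ∈ Tri := ⟨hx, hux, by rw [sx.1], by rw [sx.2]; norm_num, by rw [sx.1, sx.2]; norm_num⟩
  -- Angular proximity to `uv` at `u` is measured by the slope `s / t`.
  obtain ⟨w, hw, hmax⟩ := Set.exists_max_image Tri (fun q => s q / t q) hfin ⟨x, hxT⟩
  have hmax' : ∀ q ∈ Tri, s q * t w ≤ s w * t q := by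
    intro q hq
    have := hmax q hq
    rwa [div_le_div_iff₀ (t_pos q hq) (t_pos w hw)] at this
  have htw := t_pos w hw
  obtain ⟨hwP, hwu, hw1, hw2, hw3⟩ := hw
  have outside : ∀ a ∈ P, s w * t a < s a * t w → t a < 0 ∨ 1 < s a + t a := by
    intro a ha hg
    by_contra hcon
    push Not at hcon
    have hsa : 0 < s a := pos_of_mul_pos_left (lt_of_le_of_lt (mul_nonneg hw1 hcon.1) hg) htw.le
    have hau : a ≠ u := by rintro rfl; linarith [su.1]
    have := hmax' a ⟨ha, hau, hsa.le, hcon.1, hcon.2⟩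
    linarith
  refine ⟨w, hwP, s w, t w, hw1, htw, hw3, hst w, ?_, ?_⟩
  · by_contra hns
    unfold CanSee at hns
    push Not at hns
    obtain ⟨hns, ⟨a, b⟩, hab, m, hm1, hm2⟩ := hns
    simp only at hm1
    obtain ⟨l, hl0, hl1, hm2a, hm2b⟩ := mem_os.1 hm2
    have sm := hs_aff u w m l hm2a hm2b
    have tm := ht_aff u w m l hm2a hm2b
    rw [su.1] at sm
    rw [su.2] at tm
    -- An endpoint strictly on the `uv` side of the ray `uw` forces a forbidden crossing.
    have main : ∀ a b : Pt, Constr S a b → a ∈ P → m ∈ openSegment ℝ a b →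
        s w * t a < s a * t w → False := by
      intro a b hab ha hm hg
      obtain ⟨τ, hτ0, hτ1, hτs, hτ⟩ := exit_triangle (m₁ := s m) (m₂ := t m) (a₁ := s a)
        (a₂ := t a) (s₀ := s w) (t₀ := t w) (by rw [tm]; nlinarith) (by rw [sm, tm]; nlinarith)
        (by rw [sm, tm]; ring) hw1 htw hg (outside a ha hg)
      obtain ⟨κ, hκ0, hκ1, hκa, hκb⟩ := mem_os.1 hm
      obtain ⟨n, hn⟩ : ∃ n : Pt, n = (m.1 + τ * (a.1 - m.1), m.2 + τ * (a.2 - m.2)) := ⟨_, rfl⟩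
      have hn1 : n.1 = m.1 + τ * (a.1 - m.1) := by rw [hn]
      have hn2 : n.2 = m.2 + τ * (a.2 - m.2) := by rw [hn]
      have sn := hs_aff m a n τ hn1 hn2
      have tn := ht_aff m a n τ hn1 hn2
      rw [← sn, ← tn] at hτ
      rw [← sn] at hτs
      have hnab : n ∈ openSegment ℝ a b := by
        refine mem_os.2 ⟨(1 - τ) * κ, mul_pos (by linarith) hκ0, by nlinarith, ?_, ?_⟩
        · rw [hn1, hκa]; ring
        · rw [hn2, hκb]; ring
      have tm' := ht_aff a b m κ hκa hκb
      have sm' := hs_aff a b m κ hκa hκb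
      have hlt : 0 < l * t w := mul_pos hl0 htw
      have hls : l * (s w + t w) < 1 := by nlinarith
      rcases hτ with ⟨h1, h2⟩ | ⟨h1, h2⟩
      · rcases eq_of_cross hSnc huv hab hnab (side1 n h1 hτs h2) with ⟨rfl, rfl⟩ | ⟨rfl, rfl⟩
        · rw [su.2, sv.2] at tm'; linarith
        · rw [su.2, sv.2] at tm'; linarith
      · have e : s m + t m = (s a + t a) + κ * ((s b + t b) - (s a + t a)) := by
          rw [sm', tm']; ring
        have e2 : s m + t m < 1 := by rw [sm, tm]; linarith
        rcases eq_of_cross hSnc hxy hab hnab (side2 n h1 hτs h2) with ⟨rfl, rfl⟩ | ⟨rfl, rfl⟩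
        · rw [sy, sx.1, sx.2] at e; linarith
        · rw [sy, sx.1, sx.2] at e; linarith
    obtain ⟨haP, hbP⟩ := hSP _ hab
    simp only at haP hbP
    obtain ⟨κ, hκ0, hκ1, hκa, hκb⟩ := mem_os.1 hm1
    have hga : ¬ s w * t a < s a * t w := main a b (Or.inl hab) haP hm1
    have hgb : ¬ s w * t b < s b * t w :=
      main b a (Or.inr hab) hbP (by rwa [openSegment_symm ℝ])
    have tm' := ht_aff a b m κ hκa hκb
    have sm' := hs_aff a b m κ hκa hκb
    have hsum : (1 - κ) * (s w * t a - s a * t w) + κ * (s w * t b - s b * t w) = 0 := by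
      have e : s w * t m - s m * t w = 0 := by rw [sm, tm]; ring
      rw [sm', tm'] at e
      linear_combination e
    have hga' : s w * t a - s a * t w = 0 := by
      nlinarith [mul_nonneg hκ0.le (show 0 ≤ s w * t b - s b * t w by linarith)]
    have hgb' : s w * t b - s b * t w = 0 := by
      rw [hga'] at hsum
      have : κ * (s w * t b - s b * t w) = 0 := by linarith
      exact (mul_eq_zero.1 this).resolve_left hκ0.ne'
    -- Both endpoints lie on the line `uw`, so the constraint is `uw` itself.
    have online : ∀ q ∈ P, s w * t q - s q * t w = 0 → q = u ∨ q = w := by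
      intro q hq h
      by_contra hcon
      push Not at hcon
      refine cross_ne hGP hu hwP hq hwu.symm hcon.2.symm hcon.1.symm ?_
      have a1 := congrArg Prod.fst (hst q)
      have a2 := congrArg Prod.snd (hst q)
      have b1 := congrArg Prod.fst (hst w)
      have b2 := congrArg Prod.snd (hst w)
      simp only [Prod.fst_add, Prod.snd_add, Prod.smul_fst, Prod.smul_snd, Prod.fst_sub,
        Prod.snd_sub, smul_eq_mul] at a1 a2 b1 b2
      simp only [crossP, Prod.fst_sub, Prod.snd_sub]
      rw [a1, a2, b1, b2]
      linear_combination ((p.1 - u.1) * (x.2 - u.2) - (p.2 - u.2) * (x.1 - u.1)) * h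
    have hlt : 0 < l * t w := mul_pos hl0 htw
    rcases online a haP hga' with rfl | rfl <;> rcases online b hbP hgb' with rfl | rfl
    · rw [su.2] at tm'; linarith
    · exact hns (Or.inl hab)
    · exact hns (Or.inr hab)
    · nlinarith
  · intro z hz hcross
    have hzP : z ∈ P := by
      rcases hz with h | h
      · exact (hSP _ h).2
      · exact (hSP _ h).1
    have hprod : 0 < t z * (s z * t w - s w * t z) := by
      have a1 := congrArg Prod.fst (hst z)
      have a2 := congrArg Prod.snd (hst z)
      have b1 := congrArg Prod.fst (hst w)
      have b2 := congrArg Prod.snd (hst w)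
      have c1 := congrArg Prod.fst (hst v)
      have c2 := congrArg Prod.snd (hst v)
      simp only [Prod.fst_add, Prod.snd_add, Prod.smul_fst, Prod.smul_snd, Prod.fst_sub,
        Prod.snd_sub, smul_eq_mul] at a1 a2 b1 b2 c1 c2
      rw [sv.2] at c1 c2
      have e : crossP (z - u) (v - u) * crossP (z - u) (w - u) =
          -(s v * crossP (p - u) (x - u) ^ 2) * (t z * (s z * t w - s w * t z)) := by
        simp only [crossP, Prod.fst_sub, Prod.snd_sub]
        rw [a1, a2, b1, b2, c1, c2]
        ring
      rw [e] at hcross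
      have hpos : 0 < s v * crossP (p - u) (x - u) ^ 2 := by positivity
      by_contra hcon
      push Not at hcon
      nlinarith [mul_nonneg hpos.le (neg_nonneg.2 hcon)]
    rcases pos_and_pos_or_neg_and_neg_of_mul_pos hprod with ⟨h1, h2⟩ | ⟨h1, h2⟩
    · exfalso
      have h3 : 1 < s z + t z :=
        (outside z hzP (by linarith)).resolve_left (by linarith)
      have h4 : 0 < s z := by
        have : 0 < s z * t w := by linarith [mul_nonneg hw1 h1.le]
        exact pos_of_mul_pos_left this htw.le
      -- The constraint leaves the triangle where `s + t = 1`.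
      obtain ⟨τ, hτ⟩ : ∃ τ : ℝ, τ = 1 / (s z + t z) := ⟨_, rfl⟩
      have hτ0 : 0 < τ := by rw [hτ]; positivity
      have hτ1 : τ * (s z + t z) = 1 := by rw [hτ]; field_simp
      have hτ2 : τ < 1 := by nlinarith
      obtain ⟨n, hn⟩ : ∃ n : Pt, n = (u.1 + τ * (z.1 - u.1), u.2 + τ * (z.2 - u.2)) := ⟨_, rfl⟩
      have hn1 : n.1 = u.1 + τ * (z.1 - u.1) := by rw [hn]
      have hn2 : n.2 = u.2 + τ * (z.2 - u.2) := by rw [hn]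
      have sn := hs_aff u z n τ hn1 hn2
      have tn := ht_aff u z n τ hn1 hn2
      rw [su.1] at sn
      rw [su.2] at tn
      have hnz : n ∈ openSegment ℝ u z := mem_os.2 ⟨τ, hτ0, hτ2, hn1, hn2⟩
      have hnx : n ∈ openSegment ℝ x y := by
        refine side2 n (by rw [sn, tn]; linarith) ?_ ?_
        · rw [sn]; nlinarith
        · rw [tn]; nlinarith
      rcases eq_of_cross hSnc hxy hz hnz hnx with h | h
      · exact hux h.1.symm
      · exact huy h.1.symm
    · refine ⟨s z, t z, ?_, h1, hst z⟩
      have : s z * t w < 0 := by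
        have := mul_nonneg hw1 (neg_nonneg.2 h1.le)
        linarith
      by_contra hcon
      push Not at hcon
      linarith [mul_nonneg hcon htw.le]

/-! ### Canonical triangles and planarity -/

lemma fn_comb (k : Fin 3) (u p x : Pt) (a b : ℝ) :
    fn k (u + a • (p - u) + b • (x - u)) =
      fn k u + a * (fn k p - fn k u) + b * (fn k x - fn k u) := by
  simp [fn]; ring

lemma fn_seg (k : Fin 3) {a b q : Pt} {τ : ℝ} (h1 : q.1 = a.1 + τ * (b.1 - a.1))
    (h2 : q.2 = a.2 + τ * (b.2 - a.2)) : fn k q = fn k a + τ * (fn k b - fn k a) := by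
  simp only [fn, h1, h2]; ring

/-- If a segment `xy` between mutually visible points crosses an edge `uv` with apex `u`, and they
share no endpoint, then the vertex `x` is outside the canonical triangle of `uv`. -/
lemma no_endpoint_in_triangle {P : Set Pt} {S : Set (Pt × Pt)} (hPfin : P.Finite)
    (hSP : ∀ c ∈ S, c.1 ∈ P ∧ c.2 ∈ P)
    (hSnc : ∀ c ∈ S, ∀ d ∈ S, c ≠ d → ¬ PCross c.1 c.2 d.1 d.2)
    (hGP : GenPos P) {u v x y p : Pt} (he : EdgeDir P S u v) (hx : x ∈ P)
    (hxy : CanSee S x y)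
    (hp : p ∈ openSegment ℝ u v) (hp' : p ∈ openSegment ℝ x y)
    (hux : x ≠ u) (hvx : x ≠ v) (huy : y ≠ u)
    (hT : ∀ k, fn k x ≤ max (fn k u) (fn k v)) : False := by
  obtain ⟨hu, hv, i', hi, hpos, hsee, hmin⟩ := he
  obtain ⟨i, rfl⟩ : ∃ i : Fin 3, i' = i := ⟨⟨i', hi⟩, rfl⟩
  have pos_fn : ∀ q, inPos i u q → fn i u < fn i q := by
    intro q hq
    rw [inPos_iff] at hq
    have h1 := fn_sum q
    have h2 := fn_sum u
    fin_cases i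
    · have := hq 1 (by decide); have := hq 2 (by decide); simp; linarith
    · have := hq 0 (by decide); have := hq 2 (by decide); simp; linarith
    · have := hq 0 (by decide); have := hq 1 (by decide); simp; linarith
  have huv' : u ≠ v := by
    rintro rfl
    exact lt_irrefl _ (pos_fn _ hpos)
  obtain ⟨w, hwP, s₀, t₀, hs, ht, hst, hw, hsw, hsub⟩ :=
    exists_visible hPfin hSP hSnc hGP hu hv hx hsee hxy hp hp' huv' hux hvx huy
  obtain ⟨ρ, hρ0, hρ1, hp1, hp2⟩ := mem_os.1 hp
  have hvi := pos_fn v hpos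
  have hxi : fn i x < fn i v :=
    lt_of_le_of_ne (by simpa [max_eq_right hvi.le] using hT i) (fn_ne hGP hx hv hvx i)
  have hpi : fn i p - fn i u < fn i v - fn i u ∧ 0 < fn i p - fn i u := by
    rw [fn_seg i hp1 hp2]
    constructor <;> nlinarith
  have hpos' := (inPos_iff i u v).1 hpos
  have hxpos : inPos i u x := by
    rw [inPos_iff]
    intro j hj
    exact lt_of_le_of_ne (by simpa [max_eq_left (hpos' j hj).le] using hT j)
      (fn_ne hGP hx hu hux j)
  have hxi' := pos_fn x hxpos
  have hwpos : inPos i u w := by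
    rw [inPos_iff]
    intro j hj
    have h1 := (inPos_iff i u x).1 hxpos j hj
    have h2 := hpos' j hj
    have h3 : fn j p - fn j u < 0 := by
      rw [fn_seg j hp1 hp2]; nlinarith
    rw [hw, fn_comb]
    nlinarith [mul_nonneg hs (neg_nonneg.2 h3.le), mul_pos ht (sub_pos.2 h1)]
  have hwu : w ≠ u := by
    rintro h
    exact lt_irrefl _ (h ▸ pos_fn w hwpos)
  have hle := hmin w hwP hwu hwpos hsw (by
    intro z hz hzpos hneg
    obtain ⟨a, b, ha, hb, hz'⟩ := hsub z hz hneg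
    have := pos_fn z hzpos
    rw [hz', fn_comb] at this
    nlinarith [mul_pos (neg_pos.2 ha) hpi.2, mul_pos (neg_pos.2 hb) (sub_pos.2 hxi')])
  rw [projLen_eq, projLen_eq, hw, fn_comb] at hle
  have h1 : s₀ * (fn i p - fn i u) ≤ s₀ * (fn i v - fn i u) :=
    mul_le_mul_of_nonneg_left hpi.1.le hs
  have h2 : t₀ * (fn i x - fn i u) < t₀ * (fn i v - fn i u) :=
    mul_lt_mul_of_pos_left (by linarith) ht
  have h3 : (s₀ + t₀) * (fn i v - fn i u) ≤ 1 * (fn i v - fn i u) :=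
    mul_le_mul_of_nonneg_right hst (by linarith)
  linarith

/-- If both endpoints of `xy` are outside the canonical triangle of `uv` and the segments meet,
then the canonical triangle of `xy` extends beyond that of `uv` across two of the three sides. -/
lemma two_sides {u v x y p : Pt}
    (hp : p ∈ openSegment ℝ u v) (hp' : p ∈ openSegment ℝ x y)
    (hx : ¬ ∀ k, fn k x ≤ max (fn k u) (fn k v)) (hy : ¬ ∀ k, fn k y ≤ max (fn k u) (fn k v)) :
    ∃ j k, j ≠ k ∧ max (fn j u) (fn j v) < max (fn j x) (fn j y) ∧
      max (fn k u) (fn k v) < max (fn k x) (fn k y) := by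
  push Not at hx hy
  obtain ⟨j, hj⟩ := hx
  obtain ⟨k, hk⟩ := hy
  refine ⟨j, k, ?_, lt_of_lt_of_le hj (le_max_left _ _), lt_of_lt_of_le hk (le_max_right _ _)⟩
  rintro rfl
  obtain ⟨ρ, hρ0, hρ1, hp1, hp2⟩ := mem_os.1 hp
  obtain ⟨σ, hσ0, hσ1, hq1, hq2⟩ := mem_os.1 hp'
  have e1 := fn_seg j hp1 hp2
  have e2 := fn_seg j hq1 hq2
  have b1 := le_max_left (fn j u) (fn j v)
  have b2 := le_max_right (fn j u) (fn j v)
  generalize max (fn j u) (fn j v) = c at *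
  have h1 : fn j p ≤ c := by rw [e1]; nlinarith
  have h2 : c < fn j p := by rw [e2]; nlinarith
  linarith

/-- Of two segments that meet, one has an endpoint in the canonical triangle of the other. -/
lemma endpoint_in_triangle {u v x y p : Pt}
    (hp : p ∈ openSegment ℝ u v) (hp' : p ∈ openSegment ℝ x y) :
    (∀ k, fn k x ≤ max (fn k u) (fn k v)) ∨ (∀ k, fn k y ≤ max (fn k u) (fn k v)) ∨
    (∀ k, fn k u ≤ max (fn k x) (fn k y)) ∨ (∀ k, fn k v ≤ max (fn k x) (fn k y)) := by
  by_contra hcon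
  simp only [not_or] at hcon
  obtain ⟨h1, h2, h3, h4⟩ := hcon
  obtain ⟨j, k, hjk, a1, a2⟩ := two_sides hp hp' h1 h2
  obtain ⟨l, m, hlm, b1, b2⟩ := two_sides hp' hp h3 h4
  have : j = l ∨ j = m ∨ k = l ∨ k = m := by omega
  rcases this with rfl | rfl | rfl | rfl <;> order

lemma edgeDir_ne {P : Set Pt} {S : Set (Pt × Pt)} {u v : Pt} (h : EdgeDir P S u v) : u ≠ v := by
  rintro rfl
  obtain ⟨-, -, i, -, h, -⟩ := h
  simp [inPos, rel, rot] at h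

lemma edgeDir_canSee {P : Set Pt} {S : Set (Pt × Pt)} {u v : Pt} (h : EdgeDir P S u v) :
    CanSee S u v := by
  obtain ⟨-, -, i, -, -, h, -⟩ := h
  exact h

/-- Planarity for edges oriented away from their apices. -/
lemma plane_dir {P : Set Pt} {S : Set (Pt × Pt)} (hPfin : P.Finite)
    (hSP : ∀ c ∈ S, c.1 ∈ P ∧ c.2 ∈ P)
    (hSnc : ∀ c ∈ S, ∀ d ∈ S, c ≠ d → ¬ PCross c.1 c.2 d.1 d.2)
    (hGP : GenPos P) {u v x y : Pt} (he : EdgeDir P S u v) (he' : EdgeDir P S x y)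
    (hne : ({u, v} : Set Pt) ≠ ({x, y} : Set Pt)) :
    openSegment ℝ u v ∩ openSegment ℝ x y = ∅ := by
  rw [Set.eq_empty_iff_forall_notMem]
  rintro p ⟨hp, hp'⟩
  have huv := edgeDir_ne he
  have hxy := edgeDir_ne he'
  have hu := he.1
  have hv := he.2.1
  have hx := he'.1
  have hy := he'.2.1
  have hq : p ∈ openSegment ℝ v u := by rwa [openSegment_symm ℝ]
  have hq' : p ∈ openSegment ℝ y x := by rwa [openSegment_symm ℝ]
  have hxu : x ≠ u := by
    rintro rfl
    exact no_shared hGP hu hv hy huv (fun h => hne (by rw [h])) hxy hp hp'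
  have hxv : x ≠ v := by
    rintro rfl
    exact no_shared hGP hv hu hy huv.symm (fun h => hne (by rw [h, Set.pair_comm])) hxy hq hp'
  have hyu : y ≠ u := by
    rintro rfl
    exact no_shared hGP hu hv hx huv (fun h => hne (by rw [h, Set.pair_comm])) hxy.symm hp hq'
  have hyv : y ≠ v := by
    rintro rfl
    exact no_shared hGP hv hu hx huv.symm (fun h => hne (by rw [h])) hxy.symm hq hq'
  have s1 := edgeDir_canSee he
  have s2 := edgeDir_canSee he'
  rcases endpoint_in_triangle hp hp' with h | h | h | h
  · exact no_endpoint_in_triangle hPfin hSP hSnc hGP he hx s2 hp hp' hxu hxv hyu h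
  · exact no_endpoint_in_triangle hPfin hSP hSnc hGP he hy (canSee_symm s2) hp hq' hyu hyv hxu h
  · exact no_endpoint_in_triangle hPfin hSP hSnc hGP he' hu s1 hp' hp hxu.symm hyu.symm hxv.symm h
  · exact no_endpoint_in_triangle hPfin hSP hSnc hGP he' hv (canSee_symm s1) hp' hq hxv.symm
      hyv.symm hxu.symm h

/-- **Planarity.** No two edges of the constrained half-theta6-graph properly cross. -/
theorem stmt_9 (P : Set Pt) (S : Set (Pt × Pt)) (hPfin : P.Finite)
    (hSP : ∀ c ∈ S, c.1 ∈ P ∧ c.2 ∈ P)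
    (hSnc : ∀ c ∈ S, ∀ d ∈ S, c ≠ d → ¬ PCross c.1 c.2 d.1 d.2)
    (hGP : GenPos P)
    (u v x y : Pt) (he : HEdge P S u v) (he' : HEdge P S x y)
    (hne : ({u, v} : Set Pt) ≠ ({x, y} : Set Pt)) :
    openSegment ℝ u v ∩ openSegment ℝ x y = ∅ := by
  rcases he with he | he <;> rcases he' with he' | he'
  · exact plane_dir hPfin hSP hSnc hGP he he' hne
  · rw [Set.pair_comm x y] at hne
    rw [openSegment_symm ℝ x y]
    exact plane_dir hPfin hSP hSnc hGP he he' hne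
  · rw [Set.pair_comm u v] at hne
    rw [openSegment_symm ℝ u v]
    exact plane_dir hPfin hSP hSnc hGP he he' hne
  · rw [Set.pair_comm u v, Set.pair_comm x y] at hne
    rw [openSegment_symm ℝ u v, openSegment_symm ℝ x y]
    exact plane_dir hPfin hSP hSnc hGP he he' hne

end CHT6
end
end
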